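/- arXiv:1401.3026 — 3 statements merged into one kernel-verified Lean document; each statement's English description precedes it below -/
import Mathlib

section
/- Let n ≥ 1, let K ⊆ ℝⁿ be a proper cone, and for M ∈ ℝ^{n×n} write S_M := {A ∈ ℝ^{n×n} : A − M leaves K invariant}. Let μ be a Borel probability measure on ℝ^{n×n} that is absolutely continuous with respect to Lebesgue measure, let M ∈ ℝ^{n×n}, and let {M_k}_{k≥1} ⊆ ℝ^{n×n} be a sequence converging to M. Then lim_{k→∞} μ(S_M ∖ S_{M_k}) = 0 and lim_{k→∞} μ(S_{M_k} ∖ S_M) = 0. -/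
open MeasureTheory Filter Topology
open scoped ENNReal RealInnerProductSpace

noncomputable section

/-- The space of real `n × n` matrices. -/
abbrev Mat (n : ℕ) := Matrix (Fin n) (Fin n) ℝ

/-- Euclidean space `ℝⁿ`. -/
abbrev EucSp (n : ℕ) := EuclideanSpace ℝ (Fin n)

/-- The (Borel = product) measurable structure on `n × n` real matrices. -/
instance matMeasurableSpace (n : ℕ) : MeasurableSpace (Mat n) :=
  inferInstanceAs (MeasurableSpace (Fin n → Fin n → ℝ))

/-- Lebesgue measure on the space of `n × n` real matrices `≅ ℝ^{n²}`. -/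
def matLebesgue (n : ℕ) : Measure (Mat n) :=
  (inferInstance : MeasureSpace (Fin n → Fin n → ℝ)).volume

/-- The operator norm (maximal singular value) of a real square matrix, induced by the
Euclidean norm. -/
def opNorm {m : ℕ} (A : Matrix (Fin m) (Fin m) ℝ) : ℝ :=
  ‖LinearMap.toContinuousLinearMap (Matrix.toEuclideanLin A)‖

/-- The product `A_k ⋯ A_1` of the matrices `f 0 = A_1, …, f (k-1) = A_k` (decreasing order of
indices). -/
def prodRev {m k : ℕ} (f : Fin k → Matrix (Fin m) (Fin m) ℝ) : Matrix (Fin m) (Fin m) ℝ :=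
  ((List.ofFn f).reverse).prod

/-- The joint spectral radius of a set of matrices:
`ρ̂(M) = limsup_{k→∞} sup_{A₁,…,A_k ∈ M} ‖A_k ⋯ A₁‖^(1/k)`. -/
def jsr {m : ℕ} (M : Set (Matrix (Fin m) (Fin m) ℝ)) : ℝ :=
  limsup (fun k : ℕ =>
    sSup {x : ℝ | ∃ f : Fin k → Matrix (Fin m) (Fin m) ℝ,
      (∀ i, f i ∈ M) ∧ x = opNorm (prodRev f)} ^ ((1 : ℝ) / k)) atTop

/-- `E[‖A_k ⋯ A₁‖^p]` where `A₁, …, A_k` are i.i.d. with law `μ`. -/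
def kExpNorm {m : ℕ} (μ : Measure (Mat m)) (p k : ℕ) : ℝ :=
  ∫ f : Fin k → Mat m, opNorm (prodRev f) ^ p ∂(Measure.pi fun _ => μ)

/-- The `L^p`-norm joint spectral radius (`p`-radius) of a probability distribution `μ`:
`ρ_{p,μ} = lim_{k→∞} (E[‖A_k ⋯ A₁‖^p])^{1/(pk)}`; since this limit exists for distributions
with bounded support, it coincides with the `limsup` used here. -/
def pRadius {m : ℕ} (μ : Measure (Mat m)) (p : ℕ) : ℝ :=
  limsup (fun k : ℕ => kExpNorm μ p k ^ (1 / (p * k : ℝ))) atTop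

/-- The (topological) support of a measure on matrices. -/
def msupport {m : ℕ} (μ : Measure (Mat m)) : Set (Mat m) :=
  {A | ∀ ε : ℝ, 0 < ε → μ {B | opNorm (B - A) < ε} ≠ 0}

/-- `μ` has bounded support. -/
def HasBoundedSupport {m : ℕ} (μ : Measure (Mat m)) : Prop :=
  ∃ C : ℝ, ∀ A ∈ msupport μ, opNorm A ≤ C

/-- A proper cone of `ℝⁿ`: a closed convex pointed cone with nonempty interior. -/
structure IsProperCone {m : ℕ} (K : Set (EucSp m)) : Prop where
  isClosed : IsClosed K
  convex : Convex ℝ K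
  smul_mem : ∀ c : ℝ, 0 ≤ c → ∀ x ∈ K, c • x ∈ K
  pointed : ∀ x ∈ K, -x ∈ K → x = 0
  solid : (interior K).Nonempty

/-- A matrix `A` leaves a cone `K` invariant: `A K ⊆ K`. -/
def LeavesInv {m : ℕ} (A : Matrix (Fin m) (Fin m) ℝ) (K : Set (EucSp m)) : Prop :=
  ∀ x ∈ K, Matrix.toEuclideanLin A x ∈ K

/-- A set of matrices leaves a cone invariant if each of its members does. -/
def SetLeavesInv {m : ℕ} (S : Set (Matrix (Fin m) (Fin m) ℝ)) (K : Set (EucSp m)) : Prop :=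
  ∀ A ∈ S, LeavesInv A K

/-- `π(K)`: the set of matrices leaving the cone `K` invariant. -/
def piCone {m : ℕ} (K : Set (EucSp m)) : Set (Mat m) := {A | LeavesInv A K}

/-- Distance (valued in `ℝ≥0∞`, with `d(A, ∅) = ∞`) from a matrix to a set of matrices, in the
operator norm. -/
def edistSet {m : ℕ} (A : Mat m) (S : Set (Mat m)) : ℝ≥0∞ :=
  ⨅ B ∈ S, ENNReal.ofReal (opNorm (A - B))

/-- Hausdorff distance between two sets of matrices (operator norm, valued in `ℝ≥0∞`). -/
def hausdorffDistE {m : ℕ} (S T : Set (Mat m)) : ℝ≥0∞ :=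
  max (⨆ A ∈ S, edistSet A T) (⨆ B ∈ T, edistSet B S)

/-- `S_M = {A : A − M leaves K invariant}`, i.e. `{A : A ≥^K M}`. -/
def matSSet {m : ℕ} (K : Set (EucSp m)) (M : Mat m) : Set (Mat m) :=
  {A | LeavesInv (A - M) K}

/-- `π_r = {M ∈ π(K) : d(M, ∂π(K)) ≥ r}`. -/
def piConeR {m : ℕ} (K : Set (EucSp m)) (r : ℝ) : Set (Mat m) :=
  {M | M ∈ piCone K ∧ ENNReal.ofReal r ≤ edistSet M (frontier (piCone K))}

/-- `M_r = (π_r ∩ supp μ_c) ∪ supp μ_s`. -/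
def MrSet {m : ℕ} (K : Set (EucSp m)) (μc μs : Measure (Mat m)) (r : ℝ) : Set (Mat m) :=
  (piConeR K r ∩ msupport μc) ∪ msupport μs

/-- The measure `ν` is zero or a finite linear combination (with positive coefficients) of
Dirac measures. -/
def IsFiniteDiracComb {m : ℕ} (ν : Measure (Mat m)) : Prop :=
  ν = 0 ∨ ∃ (N : ℕ) (w : Fin N → ℝ) (Ms : Fin N → Mat m),
    (∀ i, 0 < w i) ∧ ν = ∑ i, ENNReal.ofReal (w i) • Measure.dirac (Ms i)

/-- The `p`-th Kronecker power of a square matrix (with `A^{⊗0} = 1`, `A^{⊗(p+1)} = A^{⊗p} ⊗ A`). -/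
def kronPow {m : ℕ} (A : Matrix (Fin m) (Fin m) ℝ) :
    (p : ℕ) → Matrix (Fin (m ^ p)) (Fin (m ^ p)) ℝ
  | 0 => 1
  | p + 1 =>
    Matrix.reindex (finProdFinEquiv.trans (finCongr (pow_succ m p).symm))
      (finProdFinEquiv.trans (finCongr (pow_succ m p).symm))
      (Matrix.kroneckerMap (· * ·) (kronPow A p) A)

/-- The `q`-th Kronecker power of a vector. -/
def vecKronPow {m : ℕ} (x : EucSp m) : (q : ℕ) → EucSp (m ^ q)
  | 0 => WithLp.toLp 2 fun _ => 1
  | q + 1 => WithLp.toLp 2 fun i =>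
      vecKronPow x q (finProdFinEquiv.symm (finCongr (pow_succ m q) i)).1 *
        x (finProdFinEquiv.symm (finCongr (pow_succ m q) i)).2

/-- The spectral radius of a real square matrix: the largest modulus of a complex eigenvalue. -/
def specRad {m : ℕ} (A : Matrix (Fin m) (Fin m) ℝ) : ℝ :=
  sSup ((fun z : ℂ => ‖z‖) '' spectrum ℂ (A.map Complex.ofReal))

/-- The entrywise expectation `E[A^{⊗p}]` of the `p`-th Kronecker power under `μ`. -/
def kronExp {m : ℕ} (μ : Measure (Mat m)) (p : ℕ) :
    Matrix (Fin (m ^ p)) (Fin (m ^ p)) ℝ :=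
  Matrix.of fun i j => ∫ A, kronPow A p i j ∂μ

/-- `V` is a stochastic Lyapunov function for `μ` of degree `p` with growth rate `γ`. -/
def IsStochLyap {m : ℕ} (μ : Measure (Mat m)) (p : ℕ) (γ : ℝ) (V : EucSp m → ℝ) : Prop :=
  (∃ C₁ : ℝ, 0 < C₁ ∧ ∃ C₂ : ℝ, 0 < C₂ ∧
    ∀ x : EucSp m, C₁ * ‖x‖ ^ p ≤ V x ∧ V x ≤ C₂ * ‖x‖ ^ p) ∧
  ∀ x : EucSp m, (∫ A, V (Matrix.toEuclideanLin A x) ∂μ) ≤ γ ^ p * V x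

/-- `ν` is a norm on `ℝ^m`. -/
def IsNormFn {m : ℕ} (ν : EucSp m → ℝ) : Prop :=
  (∀ x, 0 ≤ ν x) ∧ (∀ x, ν x = 0 ↔ x = 0) ∧
  (∀ (a : ℝ) (x : EucSp m), ν (a • x) = |a| * ν x) ∧
  (∀ x y : EucSp m, ν (x + y) ≤ ν x + ν y)

/-- `ν` is cone absolute with respect to `K`:
`ν x = inf {ν (v + w) : v, w ∈ K, x = v − w}`. -/
def IsConeAbsolute {m : ℕ} (K : Set (EucSp m)) (ν : EucSp m → ℝ) : Prop :=
  ∀ x : EucSp m, ν x = sInf {r : ℝ | ∃ v ∈ K, ∃ w ∈ K, x = v - w ∧ r = ν (v + w)}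

/-- The dual cone `K* = {f : fᵀx ≥ 0 for all x ∈ K}`. -/
def dualConeSet {m : ℕ} (K : Set (EucSp m)) : Set (EucSp m) :=
  {f | ∀ x ∈ K, 0 ≤ ⟪f, x⟫}

/-- `ν` is cone linear with respect to `K`: `ν = ⟪f, ·⟫` on `K` for some `f ∈ K*`. -/
def IsConeLinear {m : ℕ} (K : Set (EucSp m)) (ν : EucSp m → ℝ) : Prop :=
  ∃ f ∈ dualConeSet K, ∀ x ∈ K, ν x = ⟪f, x⟫

/-- The matrix norm induced by a norm `ν` on `ℝ^m`. -/
def inducedNormFn {m : ℕ} (ν : EucSp m → ℝ) (A : Matrix (Fin m) (Fin m) ℝ) : ℝ :=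
  sSup {c : ℝ | ∃ x : EucSp m, x ≠ 0 ∧ c = ν (Matrix.toEuclideanLin A x) / ν x}

instance matBorelSpace (n : ℕ) : BorelSpace (Mat n) :=
  inferInstanceAs (BorelSpace (Fin n → Fin n → ℝ))

/-- A convex set of matrices has Lebesgue-null frontier. -/
lemma matLebesgue_frontier_of_convex {n : ℕ} {S : Set (Mat n)} (hS : Convex ℝ S) :
    matLebesgue n (frontier S) = 0 :=
  Convex.addHaar_frontier (E := Fin n → Fin n → ℝ) volume hS

/-- Convergence in the operator norm implies convergence in the space of matrices. -/
lemma tendsto_of_tendsto_opNorm_sub {ι : Type*} {l : Filter ι} {n : ℕ} {M : Mat n}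
    {F : ι → Mat n} (h : Tendsto (fun k => opNorm (F k - M)) l (𝓝 0)) : Tendsto F l (𝓝 M) := by
  let e : Mat n ≃ₗ[ℝ] (EucSp n →L[ℝ] EucSp n) :=
    Matrix.toEuclideanLin.trans LinearMap.toContinuousLinearMap
  have hcont : Continuous e.symm := LinearMap.continuous_of_finiteDimensional e.symm.toLinearMap
  have he : Tendsto (fun k => e (F k)) l (𝓝 (e M)) := by
    refine tendsto_iff_norm_sub_tendsto_zero.2 (h.congr fun k => ?_)
    rw [← map_sub]
    rfl
  simpa [Function.comp_def] using (hcont.tendsto (e M)).comp he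

lemma continuous_toEuclideanLin_apply {n : ℕ} (x : EucSp n) :
    Continuous fun A : Mat n => Matrix.toEuclideanLin A x :=
  LinearMap.continuous_of_finiteDimensional
    ((LinearMap.applyₗ x).comp
      (Matrix.toEuclideanLin (𝕜 := ℝ) (m := Fin n) (n := Fin n)).toLinearMap)

lemma isClosed_matSSet {n : ℕ} {K : Set (EucSp n)} (hK : IsClosed K) (M : Mat n) :
    IsClosed (matSSet K M) := by
  simp only [matSSet, LeavesInv, Set.ofPred_forall]
  exact isClosed_biInter fun x _ =>
    hK.preimage ((continuous_toEuclideanLin_apply x).comp (continuous_id.sub continuous_const))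

lemma convex_matSSet {n : ℕ} {K : Set (EucSp n)} (hK : Convex ℝ K) (M : Mat n) :
    Convex ℝ (matSSet K M) := by
  intro A hA B hB a b ha hb hab x hx
  have hdecomp : a • A + b • B - M = a • (A - M) + b • (B - M) := by
    rw [smul_sub, smul_sub, sub_add_sub_comm, ← add_smul, hab, one_smul]
  rw [hdecomp, map_add, map_smul, map_smul]
  exact hK (hA x hx) (hB x hx) ha hb hab

/-- Off the frontier of `S_M`, membership in `S_N` agrees with membership in `S_M` for `N`
close to `M`. -/
lemma eventually_mem_matSSet_iff {ι : Type*} {l : Filter ι} {n : ℕ} {K : Set (EucSp n)}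
    {M A : Mat n} {F : ι → Mat n} (hF : Tendsto F l (𝓝 M)) (hA : A ∉ frontier (matSSet K M)) :
    ∀ᶠ k in l, (A ∈ matSSet K (F k) ↔ A ∈ matSSet K M) := by
  have htrans : Tendsto (fun k => A - F k + M) l (𝓝 A) := by
    simpa using (hF.const_sub A).add_const M
  have hiff : ∀ k, A ∈ matSSet K (F k) ↔ A - F k + M ∈ matSSet K M := fun k => by
    simp [matSSet]
  simp only [hiff]
  by_cases hmem : A ∈ matSSet K M
  · have hint : A ∈ interior (matSSet K M) := by
      by_contra hnot
      exact hA ⟨subset_closure hmem, hnot⟩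
    filter_upwards [htrans (mem_interior_iff_mem_nhds.1 hint)] with k hk
    exact iff_of_true hk hmem
  · have hcompl : (matSSet K M)ᶜ ∈ 𝓝 A := by
      refine mem_interior_iff_mem_nhds.1 ?_
      rw [interior_compl]
      exact fun hcl => hA ⟨hcl, fun hint => hmem (interior_subset hint)⟩
    filter_upwards [htrans hcompl] with k hk
    exact iff_of_false hk hmem

/-- For `μ` absolutely continuous w.r.t. Lebesgue measure and `M_k → M` (in the
operator norm), `μ(S_M \ S_{M_k}) → 0` and `μ(S_{M_k} \ S_M) → 0`. -/
theorem stmt7 (n : ℕ) (hn : 1 ≤ n) (K : Set (EucSp n)) (hK : IsProperCone K)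
    (μ : Measure (Mat n)) [IsProbabilityMeasure μ] (hac : μ ≪ matLebesgue n)
    (M : Mat n) (Mk : ℕ → Mat n)
    (hconv : Tendsto (fun k => opNorm (Mk k - M)) atTop (𝓝 0)) :
    Tendsto (fun k => μ (matSSet K M \ matSSet K (Mk k))) atTop (𝓝 0) ∧
    Tendsto (fun k => μ (matSSet K (Mk k) \ matSSet K M)) atTop (𝓝 0) := by
  have hmeas : ∀ N, MeasurableSet (matSSet K N) := fun N =>
    (isClosed_matSSet hK.isClosed N).measurableSet
  have hae : ∀ᵐ A ∂μ, ∀ᶠ k in atTop, (A ∈ matSSet K (Mk k) ↔ A ∈ matSSet K M) := by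
    have hnull : μ (frontier (matSSet K M)) = 0 :=
      hac (matLebesgue_frontier_of_convex (convex_matSSet hK.convex M))
    filter_upwards [measure_eq_zero_iff_ae_notMem.1 hnull] with A hA
    exact eventually_mem_matSSet_iff (tendsto_of_tendsto_opNorm_sub hconv) hA
  rw [← measure_empty (μ := μ)]
  constructor
  · refine tendsto_measure_of_ae_tendsto_indicator_of_isFiniteMeasure atTop .empty
      (fun k => (hmeas M).diff (hmeas (Mk k))) ?_
    filter_upwards [hae] with A hA
    filter_upwards [hA] with k hk
    simp [hk]
  · refine tendsto_measure_of_ae_tendsto_indicator_of_isFiniteMeasure atTop .empty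
      (fun k => (hmeas (Mk k)).diff (hmeas M)) ?_
    filter_upwards [hae] with A hA
    filter_upwards [hA] with k hk
    simp [hk]

end
end

section
/- Let n ≥ 1, let K ⊆ ℝⁿ be a proper cone, and let π = π(K) be the set of n×n matrices leaving K invariant. Let μ be a Borel probability measure on ℝ^{n×n} with bounded support whose support leaves K invariant and whose singular part μ_s with respect to Lebesgue measure is either zero or a finite linear combination of Dirac measures with positive weights; write μ = μ_c + μ_s with μ_c absolutely continuous. For r > 0 define π_r := {M ∈ π : d(M, ∂π) ≥ r} and M_r := (π_r ∩ supp μ_c) ∪ supp μ_s, and for M ∈ ℝ^{n×n} write S_M := {A ∈ ℝ^{n×n} : A − M leaves K invariant}. Let r₀ > 0 be such that M_r is nonempty for all 0 < r < r₀. Then for every r with 0 < r < r₀ and every ε > 0 there exists δ > 0 such that μ(S_{(1−ε)M}) ≥ δ for every M ∈ M_r. -/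
open MeasureTheory Filter Topology
open scoped ENNReal RealInnerProductSpace

noncomputable section

/-- The linear identification of matrices with continuous linear maps of Euclidean space, which
carries `opNorm` to the norm. -/
def toOp (m : ℕ) : Mat m →ₗ[ℝ] (EucSp m →L[ℝ] EucSp m) :=
  LinearMap.toContinuousLinearMap.toLinearMap ∘ₗ (Matrix.toEuclideanLin (𝕜 := ℝ)).toLinearMap

lemma opNorm_eq_norm_toOp {m : ℕ} (A : Mat m) : opNorm A = ‖toOp m A‖ := rfl

lemma toOp_injective (m : ℕ) : Function.Injective (toOp m) :=
  LinearMap.toContinuousLinearMap.injective.comp Matrix.toEuclideanLin.injective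

lemma opNorm_sub_add_le {m : ℕ} (A B C : Mat m) :
    opNorm (A - C) ≤ opNorm (A - B) + opNorm (B - C) := by
  simp only [opNorm_eq_norm_toOp, map_sub]
  exact norm_sub_le_norm_sub_add_norm_sub _ _ _

lemma opNorm_smul {m : ℕ} (c : ℝ) (A : Mat m) : opNorm (c • A) = |c| * opNorm A := by
  simp only [opNorm_eq_norm_toOp, map_smul, norm_smul, Real.norm_eq_abs]

lemma opNorm_neg {m : ℕ} (A : Mat m) : opNorm (-A) = opNorm A := by
  simp only [opNorm_eq_norm_toOp, map_neg, norm_neg]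

lemma LeavesInv.smul {m : ℕ} {K : Set (EucSp m)} (hK : IsProperCone K) {A : Mat m}
    (hA : LeavesInv A K) {c : ℝ} (hc : 0 ≤ c) : LeavesInv (c • A) K := fun x hx => by
  simpa using hK.smul_mem c hc _ (hA x hx)

/-- A set of matrices that is bounded in operator norm has finite `η`-nets. -/
lemma exists_finite_net_opNorm {m : ℕ} {S : Set (Mat m)} {C : ℝ} (hS : ∀ A ∈ S, opNorm A ≤ C)
    {η : ℝ} (hη : 0 < η) :
    ∃ t ⊆ S, t.Finite ∧ ∀ A ∈ S, ∃ B ∈ t, opNorm (A - B) < η := by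
  have hb : toOp m '' S ⊆ Metric.closedBall 0 C := by
    rintro _ ⟨A, hA, rfl⟩
    simpa [opNorm_eq_norm_toOp] using hS A hA
  obtain ⟨t, htS, ht, hcov⟩ := Metric.finite_approx_of_totallyBounded
    ((isCompact_closedBall _ C).totallyBounded.subset hb) η hη
  obtain ⟨u, huS, hu, rfl⟩ := (Set.exists_subset_image_finite_and
    (p := fun v => v = t)).1 ⟨t, htS, ht, rfl⟩
  refine ⟨u, huS, hu, fun A hA => ?_⟩
  obtain ⟨_, ⟨B, hB, rfl⟩, hAB⟩ := Set.mem_iUnion₂.1 (hcov (Set.mem_image_of_mem _ hA))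
  exact ⟨B, hB, by simpa [opNorm_eq_norm_toOp, dist_eq_norm] using hAB⟩

/-- A preconnected set meeting both `u` and its complement meets the frontier of `u`. -/
lemma inter_frontier_nonempty_of_isPreconnected {α : Type*} [TopologicalSpace α] {s u : Set α}
    (hs : IsPreconnected s) (hu : (s ∩ u).Nonempty) (huc : (s ∩ uᶜ).Nonempty) :
    (s ∩ frontier u).Nonempty := by
  by_contra hemp
  have hnf : ∀ x ∈ s, x ∈ closure u → x ∈ interior u := fun x hx hc => by
    by_contra hi
    exact hemp ⟨x, hx, hc, hi⟩
  obtain ⟨x, hx, hxu⟩ := hu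
  obtain ⟨y, hy, hyu⟩ := huc
  obtain ⟨z, -, hzi, hzc⟩ := hs (interior u) (closure u)ᶜ isOpen_interior
    isClosed_closure.isOpen_compl
    (fun z hz => (em (z ∈ closure u)).imp (hnf z hz) id)
    ⟨x, hx, hnf x hx (subset_closure hxu)⟩
    ⟨y, hy, fun hc => hyu (interior_subset (hnf y hy hc))⟩
  exact hzc (interior_subset_closure hzi)

/-- The open operator-norm ball of radius `r` about a point of `π_r` lies in `π(K)`. -/
lemma leavesInv_of_mem_piConeR {m : ℕ} {K : Set (EucSp m)} {r : ℝ} (hr : 0 < r) {M A : Mat m}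
    (hM : M ∈ piConeR K r) (hA : opNorm (A - M) < r) : LeavesInv A K := by
  by_contra hAK
  obtain ⟨B, hB, hBf⟩ := inter_frontier_nonempty_of_isPreconnected
    (u := piCone K) (convex_segment (𝕜 := ℝ) M A).isPreconnected
    ⟨M, left_mem_segment ℝ M A, hM.1⟩ ⟨A, right_mem_segment ℝ M A, hAK⟩
  rw [segment_eq_image'] at hB
  obtain ⟨θ, hθ, rfl⟩ := hB
  have hle := hM.2.trans (iInf₂_le _ hBf)
  rw [ENNReal.ofReal_le_ofReal_iff', sub_add_cancel_left, opNorm_neg, opNorm_smul,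
    abs_of_nonneg hθ.1] at hle
  have h0 : 0 ≤ opNorm (A - M) := norm_nonneg _
  rcases hle with hle | hle
  · nlinarith [mul_le_of_le_one_left h0 hθ.2]
  · linarith

/-- For `M ∈ π_r`, the set `S_{(1-ε)M}` contains the ball of radius `ε r` about `M`. -/
lemma ball_subset_matSSet {m : ℕ} {K : Set (EucSp m)} (hK : IsProperCone K) {r ε : ℝ} (hr : 0 < r)
    (hε : 0 < ε) {M : Mat m} (hM : M ∈ piConeR K r) :
    {A | opNorm (A - M) < ε * r} ⊆ matSSet K ((1 - ε) • M) := by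
  intro A hA
  have hball : LeavesInv (M + ε⁻¹ • (A - M)) K := by
    refine leavesInv_of_mem_piConeR hr hM ?_
    rw [add_sub_cancel_left, opNorm_smul, abs_of_pos (inv_pos.2 hε), inv_mul_lt_iff₀ hε]
    exact hA
  have heq : A - (1 - ε) • M = ε • (M + ε⁻¹ • (A - M)) := by
    rw [smul_add, smul_inv_smul₀ hε.ne', sub_smul, one_smul]
    abel
  change LeavesInv (A - (1 - ε) • M) K
  exact heq ▸ hball.smul hK hε.le

lemma msupport_mono {m : ℕ} {μ ν : Measure (Mat m)} (h : μ ≤ ν) : msupport μ ⊆ msupport ν :=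
  fun _ hA ε hε h0 => hA ε hε (nonpos_iff_eq_zero.1 ((h _).trans_eq h0))

/-- Finitely many nonzero extended nonnegative reals have a common positive real lower bound. -/
lemma exists_pos_ofReal_le {α : Type*} {t : Set α} (ht : t.Finite) {f : α → ℝ≥0∞}
    (hf : ∀ a ∈ t, f a ≠ 0) : ∃ δ : ℝ, 0 < δ ∧ ∀ a ∈ t, ENNReal.ofReal δ ≤ f a := by
  have hpos : 0 < ht.toFinset.inf f :=
    (Finset.lt_inf_iff ENNReal.zero_lt_top).2 fun a ha =>
      pos_iff_ne_zero.2 (hf a (ht.mem_toFinset.1 ha))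
  obtain ⟨δ, hδ, hlt⟩ := ENNReal.lt_iff_exists_real_btwn.1 hpos
  exact ⟨δ, ENNReal.ofReal_pos.1 hlt.1, fun a ha =>
    hlt.2.le.trans (Finset.inf_le (ht.mem_toFinset.2 ha))⟩

instance matMeasurableSingletonClass (n : ℕ) : MeasurableSingletonClass (Mat n) :=
  inferInstanceAs (MeasurableSingletonClass (Fin n → Fin n → ℝ))

/-- The support of a finite Dirac combination is a finite set of atoms. -/
lemma IsFiniteDiracComb.finite_msupport {m : ℕ} {ν : Measure (Mat m)} (hν : IsFiniteDiracComb ν) :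
    (msupport ν).Finite ∧ ∀ A ∈ msupport ν, ν {A} ≠ 0 := by
  obtain rfl | ⟨N, w, Ms, hw, rfl⟩ := hν
  · have hempty : msupport (0 : Measure (Mat m)) = ∅ :=
      Set.eq_empty_of_forall_notMem fun A hA => hA 1 one_pos rfl
    simp [hempty]
  have hsub : msupport (∑ i, ENNReal.ofReal (w i) • Measure.dirac (Ms i)) ⊆ Set.range Ms := by
    intro A hA
    by_contra hAr
    have hpos : ∀ i ∈ (Set.univ : Set (Fin N)), ENNReal.ofReal (opNorm (Ms i - A)) ≠ 0 := by
      intro i _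
      rw [ne_eq, ENNReal.ofReal_eq_zero, not_le, opNorm_eq_norm_toOp, norm_pos_iff,
        map_ne_zero_iff _ (toOp_injective m), sub_ne_zero]
      exact fun h => hAr ⟨i, h⟩
    obtain ⟨δ, hδ, hle⟩ := exists_pos_ofReal_le Set.finite_univ hpos
    refine hA δ hδ ?_
    have hnot : ∀ i, ¬ opNorm (Ms i - A) < δ := fun i =>
      not_lt.2 ((ENNReal.ofReal_le_ofReal_iff (norm_nonneg _)).1 (hle i trivial))
    simp [hnot]
  refine ⟨(Set.finite_range Ms).subset hsub, fun A hA => ?_⟩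
  obtain ⟨i, rfl⟩ := hsub hA
  simp only [Measure.coe_finsetSum, Measure.coe_smul, Finset.sum_apply, Pi.smul_apply, ne_eq,
    Finset.sum_eq_zero_iff, not_forall]
  exact ⟨i, Finset.mem_univ i, by simp [hw i]⟩

/-- With `μ = μ_c + μ_s` as above and `supp μ` leaving `K` invariant, for every
`0 < r < r₀` (where `M_r` is nonempty for `0 < r < r₀`) and every `ε > 0` there is `δ > 0`
such that `μ(S_{(1−ε)M}) ≥ δ` for every `M ∈ M_r`. -/
theorem stmt8 (n : ℕ) (hn : 1 ≤ n) (K : Set (EucSp n)) (hK : IsProperCone K)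
    (μ μc μs : Measure (Mat n)) [IsProbabilityMeasure μ] (hbdd : HasBoundedSupport μ)
    (hinv : SetLeavesInv (msupport μ) K)
    (hdec : μ = μc + μs) (hac : μc ≪ matLebesgue n) (hs : IsFiniteDiracComb μs)
    (r₀ : ℝ) (hr₀ : 0 < r₀) (hne : ∀ r : ℝ, 0 < r → r < r₀ → (MrSet K μc μs r).Nonempty) :
    ∀ r : ℝ, 0 < r → r < r₀ → ∀ ε : ℝ, 0 < ε →
      ∃ δ : ℝ, 0 < δ ∧ ∀ M ∈ MrSet K μc μs r,
        ENNReal.ofReal δ ≤ μ (matSSet K ((1 - ε) • M)) := by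
  intro r hr _ ε hε
  obtain ⟨C, hC⟩ := hbdd
  have hcμ : msupport μc ⊆ msupport μ := msupport_mono (hdec ▸ Measure.le_add_right le_rfl)
  have hsμ : msupport μs ⊆ msupport μ := msupport_mono (hdec ▸ Measure.le_add_left le_rfl)
  have hη : 0 < ε * r / 2 := by positivity
  obtain ⟨t, htS, ht, hnet⟩ := exists_finite_net_opNorm
    (S := msupport μc) (fun A hA => hC A (hcμ hA)) hη
  obtain ⟨δc, hδc, hc⟩ := exists_pos_ofReal_le ht
    (f := fun B => μ {A | opNorm (A - B) < ε * r / 2}) fun B hB => hcμ (htS hB) _ hη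
  obtain ⟨hfin, hatom⟩ := hs.finite_msupport
  obtain ⟨δs, hδs, hsing⟩ := exists_pos_ofReal_le hfin (f := fun A => μs {A}) hatom
  refine ⟨min δc δs, lt_min hδc hδs, ?_⟩
  rintro M (⟨hMr, hMc⟩ | hMs)
  · obtain ⟨B, hB, hMB⟩ := hnet M hMc
    refine (ENNReal.ofReal_le_ofReal (min_le_left _ _)).trans ((hc B hB).trans (measure_mono ?_))
    refine subset_trans (fun A hA => ?_) (ball_subset_matSSet hK hr hε hMr)
    have hBM : opNorm (B - M) < ε * r / 2 := by rwa [← opNorm_neg, neg_sub]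
    have hAB : opNorm (A - B) < ε * r / 2 := hA
    change opNorm (A - M) < ε * r
    linarith [opNorm_sub_add_le A B M]
  · have hmem : M ∈ matSSet K ((1 - ε) • M) := by
      have heq : M - (1 - ε) • M = ε • M := by rw [sub_smul, one_smul, sub_sub_cancel]
      change LeavesInv (M - (1 - ε) • M) K
      exact heq ▸ LeavesInv.smul hK (hinv M (hsμ hMs)) hε.le
    calc ENNReal.ofReal (min δc δs) ≤ μs {M} :=
          (ENNReal.ofReal_le_ofReal (min_le_right _ _)).trans (hsing M hMs)
      _ ≤ μ {M} := hdec ▸ Measure.le_add_left le_rfl _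
      _ ≤ μ (matSSet K ((1 - ε) • M)) := measure_mono (Set.singleton_subset_iff.2 hmem)

end
end

section
/- Let n ≥ 1 and let μ be a Borel probability measure on ℝ^{n×n} with bounded support. For a positive integer m, let μ^{⊗m} denote the pushforward of μ under the map A ↦ A^{⊗m} (the m-th Kronecker power). Then for all positive integers p and m, ρ_{p, μ^{⊗m}} = (ρ_{mp, μ})^m. -/
open MeasureTheory Filter Topology
open scoped ENNReal RealInnerProductSpace

noncomputable section

section L2OperatorNorm

open scoped Matrix.Norms.L2Operator Kronecker Matrix

variable {ι κ : Type*} [Fintype ι] [Fintype κ]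

theorem kronecker_mulVec_mul (A : Matrix ι ι ℝ) (B : Matrix κ κ ℝ) (x : ι → ℝ) (y : κ → ℝ)
    (i : ι) (j : κ) :
    ((A ⊗ₖ B) *ᵥ fun q => x q.1 * y q.2) (i, j) = (A *ᵥ x) i * (B *ᵥ y) j := by
  simp only [Matrix.mulVec, dotProduct, Matrix.kroneckerMap_apply, Fintype.sum_prod_type,
    Finset.sum_mul_sum]
  exact Finset.sum_congr rfl fun _ _ => Finset.sum_congr rfl fun _ _ => by ring

variable [DecidableEq κ]

theorem sum_sq_mulVec_le_l2_opNorm (A : Matrix ι κ ℝ) (x : κ → ℝ) :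
    ∑ i, (A *ᵥ x) i ^ 2 ≤ ‖A‖ ^ 2 * ∑ j, x j ^ 2 := by
  have h := Matrix.l2_opNorm_mulVec A (WithLp.toLp 2 x)
  have h2 := pow_le_pow_left₀ (norm_nonneg _) h 2
  rw [mul_pow, EuclideanSpace.real_norm_sq_eq, EuclideanSpace.real_norm_sq_eq] at h2
  exact h2

theorem l2_opNorm_le_of_sum_sq_mulVec_le (A : Matrix ι κ ℝ) {C : ℝ} (hC : 0 ≤ C)
    (h : ∀ x : κ → ℝ, ∑ i, (A *ᵥ x) i ^ 2 ≤ C ^ 2 * ∑ j, x j ^ 2) : ‖A‖ ≤ C := by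
  rw [Matrix.l2_opNorm_def]
  refine ContinuousLinearMap.opNorm_le_bound _ hC fun x => ?_
  refine le_of_sq_le_sq ?_ (mul_nonneg hC (norm_nonneg _))
  rw [mul_pow, EuclideanSpace.real_norm_sq_eq, EuclideanSpace.real_norm_sq_eq]
  exact h x.ofLp

variable [DecidableEq ι]

theorem l2_opNorm_reindex_le (e : ι ≃ κ) (A : Matrix ι ι ℝ) :
    ‖Matrix.reindex e e A‖ ≤ ‖A‖ := by
  refine l2_opNorm_le_of_sum_sq_mulVec_le _ (norm_nonneg _) fun x => ?_
  rw [← e.sum_comp, ← e.sum_comp (fun j => x j ^ 2)]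
  refine le_of_eq_of_le (Finset.sum_congr rfl fun i _ => ?_)
    (sum_sq_mulVec_le_l2_opNorm A (x ∘ e))
  simp [Matrix.mulVec, dotProduct, ← e.sum_comp]

theorem l2_opNorm_reindex (e : ι ≃ κ) (A : Matrix ι ι ℝ) :
    ‖Matrix.reindex e e A‖ = ‖A‖ := by
  refine le_antisymm (l2_opNorm_reindex_le e A) ?_
  simpa using l2_opNorm_reindex_le e.symm (Matrix.reindex e e A)

theorem l2_opNorm_one_kronecker_le (B : Matrix κ κ ℝ) :
    ‖(1 : Matrix ι ι ℝ) ⊗ₖ B‖ ≤ ‖B‖ := by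
  refine l2_opNorm_le_of_sum_sq_mulVec_le _ (norm_nonneg _) fun x => ?_
  rw [Fintype.sum_prod_type, Fintype.sum_prod_type, Finset.mul_sum]
  refine Finset.sum_le_sum fun i _ => ?_
  refine le_of_eq_of_le (Finset.sum_congr rfl fun j _ => ?_)
    (sum_sq_mulVec_le_l2_opNorm B fun j => x (i, j))
  simp [Matrix.mulVec, dotProduct, Fintype.sum_prod_type, Matrix.one_apply]

theorem l2_opNorm_kronecker_one_le (A : Matrix ι ι ℝ) :
    ‖A ⊗ₖ (1 : Matrix κ κ ℝ)‖ ≤ ‖A‖ := by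
  refine l2_opNorm_le_of_sum_sq_mulVec_le _ (norm_nonneg _) fun x => ?_
  rw [Fintype.sum_prod_type_right, Fintype.sum_prod_type_right, Finset.mul_sum]
  refine Finset.sum_le_sum fun j _ => ?_
  refine le_of_eq_of_le (Finset.sum_congr rfl fun i _ => ?_)
    (sum_sq_mulVec_le_l2_opNorm A fun i => x (i, j))
  simp [Matrix.mulVec, dotProduct, Fintype.sum_prod_type, Matrix.one_apply]

theorem sum_sq_mulVec_mul_le_l2_opNorm_kronecker (A : Matrix ι ι ℝ) (B : Matrix κ κ ℝ)
    (x : ι → ℝ) (y : κ → ℝ) :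
    (∑ i, (A *ᵥ x) i ^ 2) * ∑ j, (B *ᵥ y) j ^ 2 ≤
      ‖A ⊗ₖ B‖ ^ 2 * ((∑ i, x i ^ 2) * ∑ j, y j ^ 2) := by
  have h := sum_sq_mulVec_le_l2_opNorm (A ⊗ₖ B) fun q => x q.1 * y q.2
  simpa only [Fintype.sum_prod_type, kronecker_mulVec_mul, mul_pow, ← Finset.sum_mul_sum] using h

/-- The operator norm is multiplicative under Kronecker products. -/
theorem l2_opNorm_kronecker (A : Matrix ι ι ℝ) (B : Matrix κ κ ℝ) :
    ‖A ⊗ₖ B‖ = ‖A‖ * ‖B‖ := by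
  refine le_antisymm ?_ ?_
  · have h : A ⊗ₖ B = (A ⊗ₖ (1 : Matrix κ κ ℝ)) * ((1 : Matrix ι ι ℝ) ⊗ₖ B) := by
      rw [← Matrix.mul_kronecker_mul, mul_one, one_mul]
    rw [h]
    exact (norm_mul_le _ _).trans (mul_le_mul (l2_opNorm_kronecker_one_le A)
      (l2_opNorm_one_kronecker_le B) (norm_nonneg _) (norm_nonneg _))
  · have hA : ∀ y : κ → ℝ,
        √(∑ j, (B *ᵥ y) j ^ 2) * ‖A‖ ≤ ‖A ⊗ₖ B‖ * √(∑ j, y j ^ 2) := fun y => by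
      have hB0 : 0 ≤ ∑ j, (B *ᵥ y) j ^ 2 := Finset.sum_nonneg fun _ _ => sq_nonneg _
      have hy0 : 0 ≤ ∑ j, y j ^ 2 := Finset.sum_nonneg fun _ _ => sq_nonneg _
      have h : ‖√(∑ j, (B *ᵥ y) j ^ 2) • A‖ ≤ ‖A ⊗ₖ B‖ * √(∑ j, y j ^ 2) := by
        refine l2_opNorm_le_of_sum_sq_mulVec_le _ (by positivity) fun x => ?_
        simp only [Matrix.smul_mulVec, Pi.smul_apply, smul_eq_mul, mul_pow, Real.sq_sqrt hB0,
          Real.sq_sqrt hy0, ← Finset.mul_sum]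
        linarith [sum_sq_mulVec_mul_le_l2_opNorm_kronecker A B x y]
      rwa [norm_smul, Real.norm_of_nonneg (Real.sqrt_nonneg _)] at h
    have h : ‖‖A‖ • B‖ ≤ ‖A ⊗ₖ B‖ := by
      refine l2_opNorm_le_of_sum_sq_mulVec_le _ (norm_nonneg _) fun y => ?_
      have h2 := pow_le_pow_left₀ (by positivity) (hA y) 2
      rw [mul_pow, mul_pow, Real.sq_sqrt (Finset.sum_nonneg fun _ _ => sq_nonneg _),
        Real.sq_sqrt (Finset.sum_nonneg fun _ _ => sq_nonneg _)] at h2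
      simp only [Matrix.smul_mulVec, Pi.smul_apply, smul_eq_mul, mul_pow, ← Finset.mul_sum]
      linarith
    rwa [norm_smul, norm_norm] at h

theorem opNorm_eq_l2_opNorm {n : ℕ} (A : Mat n) : opNorm A = ‖A‖ :=
  (Matrix.l2_opNorm_def A).symm

theorem opNorm_kronPow {n : ℕ} (A : Mat n) (m : ℕ) : opNorm (kronPow A m) = opNorm A ^ m := by
  simp only [opNorm_eq_l2_opNorm]
  induction m with
  | zero =>
    have : Nonempty (Fin (n ^ 0)) := ⟨⟨0, by simp⟩⟩
    rw [kronPow, pow_zero]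
    exact CStarRing.norm_one
  | succ m ih =>
    rw [kronPow, l2_opNorm_reindex, pow_succ, ← ih]
    exact l2_opNorm_kronecker _ _

theorem continuous_opNorm (n : ℕ) : Continuous (opNorm : Mat n → ℝ) := by
  simpa only [← opNorm_eq_l2_opNorm] using (continuous_norm : Continuous fun A : Mat n => ‖A‖)

end L2OperatorNorm

theorem kronPow_one {n : ℕ} (m : ℕ) : kronPow (1 : Mat n) m = 1 := by
  induction m with
  | zero => rfl
  | succ m ih =>
    rw [kronPow, ih]
    refine (congrArg _ Matrix.one_kronecker_one).trans ?_
    rw [Matrix.reindex_apply, Matrix.submatrix_one_equiv]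

theorem kronPow_mul {n : ℕ} (A B : Mat n) (m : ℕ) :
    kronPow (A * B) m = kronPow A m * kronPow B m := by
  induction m with
  | zero => exact (Matrix.one_mul _).symm
  | succ m ih =>
    simp only [kronPow, ih, Matrix.reindex_apply, Matrix.submatrix_mul_equiv]
    exact congrArg (fun M => Matrix.submatrix M _ _) (Matrix.mul_kronecker_mul _ _ _ _)

theorem prodRev_kronPow {n k : ℕ} (f : Fin k → Mat n) (m : ℕ) :
    prodRev (fun i => kronPow (f i) m) = kronPow (prodRev f) m := by
  let φ : Mat n →* Mat (n ^ m) :=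
    { toFun := fun A => kronPow A m
      map_one' := kronPow_one m
      map_mul' := fun A B => kronPow_mul A B m }
  change prodRev (φ ∘ f) = φ (prodRev f)
  rw [prodRev, prodRev, map_list_prod, List.map_reverse, List.map_ofFn]

instance matSecondCountable (n : ℕ) : SecondCountableTopology (Mat n) :=
  inferInstanceAs (SecondCountableTopology (Fin n → Fin n → ℝ))

theorem continuous_kronPow (n m : ℕ) : Continuous fun A : Mat n => kronPow A m := by
  induction m with
  | zero => exact continuous_const
  | succ m ih =>
    refine continuous_matrix fun i j => ?_
    exact (ih.matrix_elem _ _).mul (continuous_id.matrix_elem _ _)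

theorem continuous_prodRev (n k : ℕ) : Continuous (prodRev : (Fin k → Mat n) → Mat n) := by
  have h : (prodRev : (Fin k → Mat n) → Mat n) =
      fun f => ((List.finRange k).reverse.map fun i => f i).prod := by
    funext f
    rw [prodRev, List.ofFn_eq_map, List.map_reverse]
  rw [h]
  exact continuous_list_prod _ fun i _ => continuous_apply i

theorem kExpNorm_map_kronPow {n : ℕ} (μ : Measure (Mat n)) [IsProbabilityMeasure μ]
    (p m k : ℕ) : kExpNorm (μ.map fun A => kronPow A m) p k = kExpNorm μ (m * p) k := by
  have hφ : Measurable fun A : Mat n => kronPow A m := (continuous_kronPow n m).measurable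
  have : IsProbabilityMeasure (μ.map fun A => kronPow A m) :=
    Measure.isProbabilityMeasure_map hφ.aemeasurable
  have hc : Continuous fun f : Fin k → Mat (n ^ m) => opNorm (prodRev f) ^ p :=
    ((continuous_opNorm _).comp (continuous_prodRev _ _)).pow p
  have hpi : Measurable fun (f : Fin k → Mat n) i => kronPow (f i) m :=
    measurable_pi_lambda _ fun i => hφ.comp (measurable_pi_apply i)
  rw [kExpNorm, kExpNorm, ← Measure.pi_map_pi fun _ => hφ.aemeasurable,
    integral_map hpi.aemeasurable hc.aestronglyMeasurable]
  simp only [prodRev_kronPow, opNorm_kronPow, pow_mul]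

theorem kExpNorm_nonneg {n : ℕ} (μ : Measure (Mat n)) (p k : ℕ) : 0 ≤ kExpNorm μ p k :=
  integral_nonneg fun _ => pow_nonneg (norm_nonneg _) _

/-- No boundedness is needed: for an unbounded sequence both sides are the junk value `0`. -/
theorem limsup_pow_of_nonneg {u : ℕ → ℝ} (hu : ∀ k, 0 ≤ u k) {m : ℕ} (hm : m ≠ 0) :
    limsup (fun k => u k ^ m) atTop = limsup u atTop ^ m := by
  by_cases hb : IsBoundedUnder (· ≤ ·) atTop u
  · have hcob : IsCoboundedUnder (· ≤ ·) atTop u :=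
      IsBoundedUnder.isCoboundedUnder_le
        ⟨0, eventually_map.2 (Eventually.of_forall hu)⟩
    have hmono : Monotone fun x : ℝ => max x 0 ^ m := fun x y hxy =>
      pow_le_pow_left₀ (le_max_right _ _) (max_le_max_right 0 hxy) m
    have hcont : Continuous fun x : ℝ => max x 0 ^ m := by fun_prop
    have h0 : 0 ≤ limsup u atTop :=
      le_limsup_of_frequently_le (Eventually.of_forall hu).frequently hb
    have h := hmono.map_limsup_of_continuousAt (F := atTop) u hcont.continuousAt hb hcob
    simp only [max_eq_left h0] at h
    rw [h]
    exact congrArg (limsup · atTop) (funext fun k => by simp [max_eq_left (hu k)])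
  · have hb' : ¬ IsBoundedUnder (· ≤ ·) atTop fun k => u k ^ m := by
      rintro ⟨C, hC⟩
      refine hb ⟨max C 1, ?_⟩
      simp only [eventually_map] at hC ⊢
      filter_upwards [hC] with k hk
      rcases le_total (u k) 1 with h1 | h1
      · exact h1.trans (le_max_right _ _)
      · exact ((le_self_pow₀ h1 hm).trans hk).trans (le_max_left _ _)
    have hzero : ∀ v : ℕ → ℝ, ¬ IsBoundedUnder (· ≤ ·) atTop v → limsup v atTop = 0 :=
      fun v hv => by
        have h : {a | ∀ᶠ k in atTop, v k ≤ a} = ∅ :=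
          Set.eq_empty_iff_forall_notMem.2 fun a ha => hv ⟨a, eventually_map.2 ha⟩
        rw [limsup_eq, h, Real.sInf_empty]
    rw [hzero u hb, hzero _ hb', zero_pow hm]

/-- For a Borel probability measure with bounded support,
`ρ_{p, μ^{⊗m}} = (ρ_{mp, μ})^m` for all positive integers `p`, `m`, where `μ^{⊗m}` is the
pushforward of `μ` under the `m`-th Kronecker power map. -/
theorem stmt13 (n : ℕ) (hn : 1 ≤ n) (μ : Measure (Mat n)) [IsProbabilityMeasure μ]
    (hbdd : HasBoundedSupport μ) (p m : ℕ) (hp : 0 < p) (hm : 0 < m) :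
    pRadius (μ.map fun A => kronPow A m) p = pRadius μ (m * p) ^ m := by
  rw [pRadius, pRadius, ← limsup_pow_of_nonneg
    (fun k => Real.rpow_nonneg (kExpNorm_nonneg μ (m * p) k) _) hm.ne']
  congr 1
  funext k
  rw [kExpNorm_map_kronPow, ← Real.rpow_mul_natCast (kExpNorm_nonneg μ (m * p) k)]
  congr 1
  have hm' : (m : ℝ) ≠ 0 := by exact_mod_cast hm.ne'
  push_cast
  rw [mul_assoc, one_div, one_div, mul_inv (m : ℝ), mul_comm _ (m : ℝ), mul_inv_cancel_left₀ hm']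

end
end
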